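/- arXiv:1501.00698 — 2 statements merged into one kernel-verified Lean document; each statement's English description precedes it below -/
import Mathlib

section
/- Suppose the real numbers $x,y,a,b,s,u$ satisfy $\big||x|-a\big|\le u$, $\big||y|-a\big|\le u$, $\big||x+s|-b\big|\le u$, $\big||y+s|-b\big|\le u$ and $|x-y|>2u$. Then $|a-b|\le 2u$ and $|s|\le 4u$. -/
/-!
Both pairs `(x, y)` and `(x + s, y + s)` have the same difference, larger than `2u`, while their
absolute values differ by at most `2u`. Hence the members of each pair have opposite signs
(`bounds_of_lt`), so, taking `y < x`, the numbers `x, -y` lie within `u` of `a` and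
`x + s, -(y + s)` lie within `u` of `b`. Comparing the two estimates of the common difference
`x - y` bounds `a - b`; comparing `x + y` with `(x + s) + (y + s)`, both at most `2u` in absolute
value, bounds `s` (in fact by `2u`).
-/

/-- Since `|p|` and `|q|` differ by at most `2u < p - q`, necessarily `q ≤ 0 ≤ p`, so both
absolute values can be resolved. -/
lemma bounds_of_lt {p q c u : ℝ} (hp : |(|p|) - c| ≤ u) (hq : |(|q|) - c| ≤ u)
    (hu : 2 * u < p - q) :
    (c - u ≤ p ∧ p ≤ c + u) ∧ (c - u ≤ -q ∧ -q ≤ c + u) := by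
  have hu0 : 0 ≤ u := (abs_nonneg _).trans hp
  rw [abs_le] at hp hq
  rcases abs_cases p with ⟨h1, _⟩ | ⟨h1, _⟩ <;> rcases abs_cases q with ⟨h2, _⟩ | ⟨h2, _⟩ <;>
    rw [h1] at hp <;> rw [h2] at hq <;> refine ⟨⟨?_, ?_⟩, ?_, ?_⟩ <;> linarith

lemma centered_abs_bounds_of_lt {x y a b s u : ℝ}
    (hx : |(|x|) - a| ≤ u) (hy : |(|y|) - a| ≤ u)
    (hxs : |(|x + s|) - b| ≤ u) (hys : |(|y + s|) - b| ≤ u)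
    (hxy : 2 * u < x - y) :
    |a - b| ≤ 2 * u ∧ |s| ≤ 4 * u := by
  have hu0 : 0 ≤ u := (abs_nonneg _).trans hx
  obtain ⟨⟨_, _⟩, _, _⟩ := bounds_of_lt hx hy hxy
  obtain ⟨⟨_, _⟩, _, _⟩ := bounds_of_lt hxs hys (by linarith)
  constructor <;> rw [abs_le] <;> constructor <;> linarith

/-- Lemma 6: if `||x|-a| ≤ u`, `||y|-a| ≤ u`, `||x+s|-b| ≤ u`, `||y+s|-b| ≤ u` and
`|x-y| > 2u`, then `|a-b| ≤ 2u` and `|s| ≤ 4u`. -/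
theorem abs_sub_le_and_abs_le_of_centered_abs_bounds
    (x y a b s u : ℝ)
    (hx : |(|x|) - a| ≤ u) (hy : |(|y|) - a| ≤ u)
    (hxs : |(|x + s|) - b| ≤ u) (hys : |(|y + s|) - b| ≤ u)
    (hxy : 2 * u < |x - y|) :
    |a - b| ≤ 2 * u ∧ |s| ≤ 4 * u := by
  rcases lt_abs.mp hxy with h | h
  · exact centered_abs_bounds_of_lt hx hy hxs hys h
  · exact centered_abs_bounds_of_lt hy hx hys hxs (by linarith)
end

section
/- Let $S$ be a real random variable, $\tilde S$ an independent copy of $S$, $a>2t>0$, and $p>0$. Suppose $\mathbb P(||S|-a|>t)\le p$, $p\le 1/30$, and $\mathbb P(|S-\tilde S|>2t)\le 5p$. Then $2\,\mathbb P(|S-a|\le t)\,\mathbb P(|S+a|\le t)\le 5p$, and consequently there exists $b\in\{a,-a\}$ such that $\mathbb P(|S-b|\le t)\le 6p$ and $\mathbb P(|S+b|>t)\le 7p$. -/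
open MeasureTheory ProbabilityTheory
open scoped ENNReal

/-!
Put `A = {|S - a| ≤ t}`, `B = {|S + a| ≤ t}`. If one of `S`, `S'` is within `t` of `a` and the
other within `t` of `-a`, then `|S - S'| ≥ 2a - 2t > 2t`; these are two disjoint events, each of
probability `μ A * μ B` by independence and equality of laws, so `2 μ A μ B ≤ 5p`.
Since `||S| - a| ≤ t` forces `S` to be near `a` or `-a`, `μ A + μ B ≥ 1 - p`. Hence the larger of
the two is at least `(1 - p) / 2 ≥ 29/60` and the smaller is at most `5p * 30/29 ≤ 6p`. With `b`
the sign of the smaller one, `{|S + b| > t}` is covered by `{||S| - a| > t}` and `{|S - b| ≤ t}`,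
giving `7p`.
-/

/-- If two finite quantities have total at least `1 - p ≥ 29/30` and product at most `5p/2`, the
smaller one is at most `6p`, because the larger one is at least `29/60`. -/
lemma le_six_mul_of_two_mul_mul_le {x y p : ℝ≥0∞} (hx : x ≠ ∞) (hy : y ≠ ∞)
    (hp : p ≤ 1 / 30) (hsum : 1 ≤ p + x + y) (hprod : 2 * x * y ≤ 5 * p) (hxy : x ≤ y) :
    x ≤ 6 * p := by
  have hpt : p ≠ ∞ := ne_top_of_le_ne_top (by simp) hp
  have hp' : p.toReal ≤ 1 / 30 := by
    simpa using ENNReal.toReal_mono (by simp) hp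
  lift x to NNReal using hx
  lift y to NNReal using hy
  lift p to NNReal using hpt
  norm_cast at *
  have h1 : (1 : ℝ) ≤ p + x + y := by exact_mod_cast hsum
  have h2 : (2 : ℝ) * x * y ≤ 5 * p := by exact_mod_cast hprod
  have h3 : (x : ℝ) ≤ y := by exact_mod_cast hxy
  have h4 : (p : ℝ) ≤ 1 / 30 := by simpa using hp'
  have hy' : (29 / 60 : ℝ) ≤ y := by linarith
  have h5 : (x : ℝ) * (29 / 60) ≤ x * y := mul_le_mul_of_nonneg_left hy' x.2
  have h6 : (0 : ℝ) ≤ p := p.2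
  have : (x : ℝ) ≤ 6 * p := by linarith
  exact_mod_cast this

/-- A point `s` with `||s| - a| ≤ t` is within `t` of `a` or of `-a`. -/
lemma near_or_near_neg {s a t : ℝ} (h : |(|s|) - a| ≤ t) : |s - a| ≤ t ∨ |s + a| ≤ t := by
  rcases abs_cases s with ⟨hs, _⟩ | ⟨hs, _⟩
  · left
    rwa [hs] at h
  · right
    rw [hs] at h
    rwa [← abs_neg, neg_add, ← sub_eq_add_neg]

/-- A step in the proof of Theorem 1: for a real random variable `S` with
independent copy `S'`, if `P(||S|-a| > t) ≤ p ≤ 1/30` and `P(|S-S'| > 2t) ≤ 5p`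
with `a > 2t > 0`, then `2 P(|S-a| ≤ t) P(|S+a| ≤ t) ≤ 5p`, and there is a sign
choice `b = ±a` with `P(|S-b| ≤ t) ≤ 6p` and `P(|S+b| > t) ≤ 7p`. -/
theorem sign_choice_of_small_symmetrization
    {Ω : Type*} [MeasurableSpace Ω] (μ : Measure Ω) [IsProbabilityMeasure μ]
    (S S' : Ω → ℝ) (hS : Measurable S) (hS' : Measurable S')
    (hindep : IndepFun S S' μ) (hcopy : μ.map S = μ.map S')
    (a t : ℝ) (p : ℝ≥0∞) (ht : 0 < t) (ha : 2 * t < a)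
    (hppos : 0 < p) (hp30 : p ≤ 1 / 30)
    (h1 : μ {ω | t < |(|S ω|) - a|} ≤ p)
    (h2 : μ {ω | 2 * t < |S ω - S' ω|} ≤ 5 * p) :
    2 * μ {ω | |S ω - a| ≤ t} * μ {ω | |S ω + a| ≤ t} ≤ 5 * p ∧
    ∃ b : ℝ, (b = a ∨ b = -a) ∧
      μ {ω | |S ω - b| ≤ t} ≤ 6 * p ∧ μ {ω | t < |S ω + b|} ≤ 7 * p := by
  have hA : MeasurableSet {x : ℝ | |x - a| ≤ t} := measurableSet_le (by fun_prop) (by fun_prop)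
  have hB : MeasurableSet {x : ℝ | |x + a| ≤ t} := measurableSet_le (by fun_prop) (by fun_prop)
  have hcopy_apply {C : Set ℝ} (hC : MeasurableSet C) : μ (S' ⁻¹' C) = μ (S ⁻¹' C) := by
    rw [← Measure.map_apply hS' hC, ← hcopy, Measure.map_apply hS hC]
  have hAB := hindep.measure_inter_preimage_eq_mul _ _ hA hB
  have hBA := hindep.measure_inter_preimage_eq_mul _ _ hB hA
  rw [hcopy_apply hB] at hAB
  rw [hcopy_apply hA] at hBA
  have hprod : 2 * μ {ω | |S ω - a| ≤ t} * μ {ω | |S ω + a| ≤ t} ≤ 5 * p := by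
    refine le_trans ?_ h2
    calc 2 * μ {ω | |S ω - a| ≤ t} * μ {ω | |S ω + a| ≤ t}
        = μ (S ⁻¹' {x | |x - a| ≤ t} ∩ S' ⁻¹' {x | |x + a| ≤ t})
          + μ (S ⁻¹' {x | |x + a| ≤ t} ∩ S' ⁻¹' {x | |x - a| ≤ t}) := by
          rw [hAB, hBA]
          simp only [Set.preimage_ofPred_eq]
          ring
      _ = μ ((S ⁻¹' {x | |x - a| ≤ t} ∩ S' ⁻¹' {x | |x + a| ≤ t})
          ∪ (S ⁻¹' {x | |x + a| ≤ t} ∩ S' ⁻¹' {x | |x - a| ≤ t})) := by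
          refine (measure_union ?_ ((hS hB).inter (hS' hA))).symm
          refine Set.disjoint_left.2 ?_
          rintro ω ⟨h, -⟩ ⟨h', -⟩
          simp only [Set.mem_preimage, Set.mem_ofPred_eq, abs_le] at h h'
          linarith [h.1, h'.2]
      _ ≤ μ {ω | 2 * t < |S ω - S' ω|} := by
          refine measure_mono ?_
          rintro ω (⟨h, h'⟩ | ⟨h, h'⟩) <;>
            simp only [Set.mem_preimage, Set.mem_ofPred_eq, abs_le, lt_abs] at h h' ⊢
          · left
            linarith [h.1, h'.2]
          · right
            linarith [h.2, h'.1]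
  refine ⟨hprod, ?_⟩
  have hsum : 1 ≤ p + μ {ω | |S ω - a| ≤ t} + μ {ω | |S ω + a| ≤ t} := by
    rw [← measure_univ (μ := μ)]
    calc μ Set.univ
        ≤ μ ({ω | t < |(|S ω|) - a|} ∪ {ω | |S ω - a| ≤ t} ∪ {ω | |S ω + a| ≤ t}) := by
          refine measure_mono fun ω _ => ?_
          rcases lt_or_ge t (|(|S ω|) - a|) with h | h
          · exact Or.inl (Or.inl h)
          · exact (near_or_near_neg h).imp Or.inr id
      _ ≤ _ := (measure_union_le _ _).trans (by gcongr; exact (measure_union_le _ _).trans (by gcongr))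
  have h67 : p + 6 * p = 7 * p := by ring
  rcases le_total (μ {ω | |S ω - a| ≤ t}) (μ {ω | |S ω + a| ≤ t}) with hle | hle
  · have h6 := le_six_mul_of_two_mul_mul_le (measure_ne_top _ _) (measure_ne_top _ _)
      hp30 hsum hprod hle
    refine ⟨a, Or.inl rfl, h6, ?_⟩
    rw [← h67]
    refine le_trans (measure_mono ?_) ((measure_union_le _ _).trans (add_le_add h1 h6))
    intro ω hω
    rcases lt_or_ge t (|(|S ω|) - a|) with h | h
    · exact Or.inl h
    · exact Or.inr ((near_or_near_neg h).resolve_right (not_le.2 hω))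
  · have h6 := le_six_mul_of_two_mul_mul_le (measure_ne_top _ _) (measure_ne_top _ _)
      hp30 (by rwa [add_right_comm]) (by rwa [mul_right_comm]) hle
    refine ⟨-a, Or.inr rfl, ?_, ?_⟩
    · simpa only [sub_neg_eq_add] using h6
    simp only [← sub_eq_add_neg]
    rw [← h67]
    refine le_trans (measure_mono ?_) ((measure_union_le _ _).trans (add_le_add h1 h6))
    intro ω hω
    rcases lt_or_ge t (|(|S ω|) - a|) with h | h
    · exact Or.inl h
    · exact Or.inr ((near_or_near_neg h).resolve_left (not_le.2 hω))
end
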